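/- Let s = (s_1,…,s_n) be a sequence of positive integers and let r = max{ asc(e) : e ∈ I_n^(s) }. Then the s-lecture hall polytope P_n^(s) is Gorenstein if and only if both of the following hold: (i) for every k with 1 ≤ k < r and every e ∈ I_{n,k}^(s), there exists e' ∈ I_{n,1}^(s) such that e + e' ∈ I_{n,k+1}^(s); and (ii) #I_{n,r}^(s) = 1. -/

import Mathlib

open scoped BigOperators

noncomputable section

/-- The `s`-lecture hall polytope
`P_n^(s) = { x ∈ ℝ^n : 0 ≤ x_1/s_1 ≤ x_2/s_2 ≤ ⋯ ≤ x_n/s_n ≤ 1 }` (indices 0-based in Lean). -/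
def lhp (n : ℕ) (s : Fin n → ℤ) : Set (Fin n → ℝ) :=
  {x | (∀ i : Fin n, (i : ℕ) = 0 → 0 ≤ x i / (s i : ℝ)) ∧
       (∀ i j : Fin n, (j : ℕ) = (i : ℕ) + 1 → x i / (s i : ℝ) ≤ x j / (s j : ℝ)) ∧
       (∀ i : Fin n, (i : ℕ) = n - 1 → x i / (s i : ℝ) ≤ 1)}

/-- The vertex `(0,…,0,s_i,s_{i+1},…,s_n)` of the lecture hall polytope (real version). -/
def lhpVertexR (n : ℕ) (s : Fin n → ℤ) (i : Fin n) : Fin n → ℝ :=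
  fun j => if i ≤ j then (s j : ℝ) else 0

/-- The vertex `(0,…,0,s_i,s_{i+1},…,s_n)` of the lecture hall polytope (integer version). -/
def lhpVertexZ (n : ℕ) (s : Fin n → ℤ) (i : Fin n) : Fin n → ℤ :=
  fun j => if i ≤ j then s j else 0

/-- `cone(P_n^(s)) = span_{ℝ≥0} { (v,1) : v a vertex of P_n^(s) } ⊆ ℝ^{n+1}`:
the set of nonnegative combinations of `(0,1)` and the `(v_i,1)`. -/
def lhpCone (n : ℕ) (s : Fin n → ℤ) : Set (Fin (n + 1) → ℝ) :=
  {x | ∃ (a : ℝ) (b : Fin n → ℝ), 0 ≤ a ∧ (∀ i, 0 ≤ b i) ∧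
      x = a • (Fin.snoc (0 : Fin n → ℝ) 1 : Fin (n + 1) → ℝ) +
        ∑ i : Fin n, b i • (Fin.snoc (lhpVertexR n s i) 1 : Fin (n + 1) → ℝ)}

/-- Lattice points of `cone(P_n^(s))`. -/
def lhpConeZ (n : ℕ) (s : Fin n → ℤ) : Set (Fin (n + 1) → ℤ) :=
  {x | (fun i => (x i : ℝ)) ∈ lhpCone n s}

/-- Lattice points of the (relative) interior of `cone(P_n^(s))`
(the cone is full-dimensional, so the relative interior is the interior). -/
def lhpConeInteriorZ (n : ℕ) (s : Fin n → ℤ) : Set (Fin (n + 1) → ℤ) :=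
  {x | (fun i => (x i : ℝ)) ∈ interior (lhpCone n s)}

/-- `P_n^(s)` is Gorenstein: some integer point `c` satisfies
`c + (cone(P) ∩ ℤ^{n+1}) = cone(P)° ∩ ℤ^{n+1}`. -/
def IsGorenstein (n : ℕ) (s : Fin n → ℤ) : Prop :=
  ∃ c : Fin (n + 1) → ℤ,
    (fun x => c + x) '' lhpConeZ n s = lhpConeInteriorZ n s

/-- `P_n^(s)` is level: finitely many integer points `c_1,…,c_m`, all with the same
last coordinate, satisfy `⋃ (c_i + (cone(P) ∩ ℤ^{n+1})) = cone(P)° ∩ ℤ^{n+1}`. -/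
def IsLevel (n : ℕ) (s : Fin n → ℤ) : Prop :=
  ∃ C : Finset (Fin (n + 1) → ℤ), C.Nonempty ∧
    (∀ c ∈ C, ∀ c' ∈ C, c (Fin.last n) = c' (Fin.last n)) ∧
    (⋃ c ∈ C, (fun x => c + x) '' lhpConeZ n s) = lhpConeInteriorZ n s

/-- The `t`-lecture hall cone `C_m^(t) = { x ∈ ℝ^m : 0 ≤ x_1/t_1 ≤ ⋯ ≤ x_m/t_m }`. -/
def lhCone (m : ℕ) (t : Fin m → ℤ) : Set (Fin m → ℝ) :=
  {x | (∀ i : Fin m, (i : ℕ) = 0 → 0 ≤ x i / (t i : ℝ)) ∧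
       (∀ i j : Fin m, (j : ℕ) = (i : ℕ) + 1 → x i / (t i : ℝ) ≤ x j / (t j : ℝ))}

/-- `e` is an `s`-inversion sequence: `0 ≤ e_i < s_i` for all `i`. -/
def IsInvSeq (n : ℕ) (s : Fin n → ℤ) (e : Fin n → ℤ) : Prop :=
  ∀ i, 0 ≤ e i ∧ e i < s i

/-- The ratio `e_i / s_i` as a rational number. -/
def invRatio (n : ℕ) (s e : Fin n → ℤ) (i : Fin n) : ℚ := (e i : ℚ) / (s i : ℚ)

/-- The ratio `e_{i-1}/s_{i-1}`, with the convention `e_0 = 0`, `s_0 = 1`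
(paper 1-based indexing; here 0-based). -/
def prevRatio (n : ℕ) (s e : Fin n → ℤ) (i : Fin n) : ℚ :=
  if (i : ℕ) = 0 then 0
  else invRatio n s e ⟨(i : ℕ) - 1, lt_of_le_of_lt (Nat.sub_le _ _) i.isLt⟩

/-- The ascent set `Asc(e) ⊆ {0,…,n-1}` of an inversion sequence. -/
def ascSet (n : ℕ) (s e : Fin n → ℤ) : Finset (Fin n) :=
  Finset.univ.filter fun i => prevRatio n s e i < invRatio n s e i

/-- The number of ascents of an inversion sequence. -/
def asc (n : ℕ) (s e : Fin n → ℤ) : ℕ := (ascSet n s e).card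

/-- Addition of inversion sequences: componentwise mod `s_i`,
with representative in `{0,…,s_i - 1}`. -/
def invAdd (n : ℕ) (s : Fin n → ℤ) (e e' : Fin n → ℤ) : Fin n → ℤ :=
  fun i => (e i + e' i) % s i

/-- `hStar n s k = # I_{n,k}^(s)`, the number of `s`-inversion sequences with `k` ascents
(the `k`-th coefficient of the `s`-Eulerian polynomial). -/
def hStar (n : ℕ) (s : Fin n → ℤ) (k : ℕ) : ℕ :=
  Nat.card {e : Fin n → ℤ // IsInvSeq n s e ∧ asc n s e = k}

/-- `s` is `u`-generated by a sequence `u` of positive integers: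
`s_2 = u_1 s_1 - 1` and `s_{i+1} = u_i s_i - s_{i-1}` for `i > 1`. -/
def IsUGenerated (n : ℕ) (s : Fin n → ℤ) : Prop :=
  ∃ u : Fin n → ℤ,
    (∀ i : Fin n, (i : ℕ) < n - 1 → 0 < u i) ∧
    (∀ k j : Fin n, (j : ℕ) = (k : ℕ) + 1 → (k : ℕ) = 0 → s j = u k * s k - 1) ∧
    (∀ a k j : Fin n, (k : ℕ) = (a : ℕ) + 1 → (j : ℕ) = (k : ℕ) + 1 →
      s j = u k * s k - s a)

/-- The (half-open) fundamental parallelepiped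
`Π = { Σ η_i (v_i,1) : 0 ≤ η_i < 1 }` of `P_n^(s)`. -/
def fpp (n : ℕ) (s : Fin n → ℤ) : Set (Fin (n + 1) → ℝ) :=
  {x | ∃ (a : ℝ) (b : Fin n → ℝ),
      (0 ≤ a ∧ a < 1) ∧ (∀ i, 0 ≤ b i ∧ b i < 1) ∧
      x = a • (Fin.snoc (0 : Fin n → ℝ) 1 : Fin (n + 1) → ℝ) +
        ∑ i : Fin n, b i • (Fin.snoc (lhpVertexR n s i) 1 : Fin (n + 1) → ℝ)}

/-- The lattice point `λ(e) ∈ ℤ^{n+1}` associated to an inversion sequence `e`: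
`λ(e)_j = ℓ_j s_j - e_j` with `ℓ_j = #(Asc(e) ∩ {0,…,j-1})` (paper 1-based `j`),
and last coordinate `asc(e)`. -/
def lamOf (n : ℕ) (s : Fin n → ℤ) (e : Fin n → ℤ) : Fin (n + 1) → ℤ :=
  Fin.snoc
    (fun j : Fin n =>
      (((ascSet n s e).filter fun i : Fin n => (i : ℕ) ≤ (j : ℕ)).card : ℤ) * s j - e j)
    (asc n s e : ℤ)

/-- A coefficient sequence `h` (of a polynomial `Σ h_j z^j` of degree `r`) is palindromic:
`h_r ≠ 0`, `h_k = 0` for `k > r`, and `h_j = h_{r-j}` for `0 ≤ j ≤ r`. -/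
def IsPalindromic (h : ℕ → ℕ) : Prop :=
  ∃ r : ℕ, h r ≠ 0 ∧ (∀ k, r < k → h k = 0) ∧ ∀ j, j ≤ r → h j = h (r - j)

end

/-!
Write `ℤ^{n+1}` in the coordinates given by the `n + 1` generators of `cone(P)`. It becomes a
lattice `G ⊇ ℤ^{n+1}` whose cone is the nonnegative orthant, so `P` is Gorenstein exactly when the
points of `G` with positive coordinates have a least element `c`. Modulo `ℤ^{n+1}` and up to the
reflection `x ↦ 1 - x`, this says that the points of `G` in the half-open unit cube have a greatest
element `m = 1 - c`. Inversion sequences parametrize these points: `asc` becomes the coordinate sum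
and addition of inversion sequences becomes addition modulo `ℤ^{n+1}`.

If `m` exists, it is the only point with coordinate sum `r`, and every other point `x` can be moved
one step towards `m`: truncating the ratios of `m - x` at `1` gives a lattice point below `m - x` of
coordinate sum `1`. Conversely, a step `x ↦ x + y mod ℤ^{n+1}` raising the coordinate sum by exactly
that of `y` involves no reduction modulo `ℤ^{n+1}`, so chains of such steps are increasing and must
end at the unique point with coordinate sum `r`.
-/

namespace LectureHall

section Box

variable {ι R : Type*} [Ring R] [LinearOrder R]

/-- The points of `G` in the half-open unit cube. When `G` is a lattice written in the coordinates
given by the generators of a simplicial cone, these are the lattice points of the half-open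
fundamental parallelepiped. -/
def box (G : AddSubgroup (ι → R)) : Set (ι → R) :=
  {x | x ∈ G ∧ ∀ i, x i ∈ Set.Ico 0 1}

variable {G : AddSubgroup (ι → R)} {x y : ι → R}

theorem nonneg_of_mem_box (hx : x ∈ box G) : 0 ≤ x := fun i => (hx.2 i).1

theorem mem_box_of_le (hx : x ∈ G) (hx₀ : 0 ≤ x) (hxy : x ≤ y) (hy : y ∈ box G) : x ∈ box G :=
  ⟨hx, fun i => ⟨hx₀ i, (hxy i).trans_lt (hy.2 i).2⟩⟩

variable [IsStrictOrderedRing R]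

section Sum

variable [Fintype ι]

theorem eq_of_le_of_sum_eq (hxy : x ≤ y) (h : ∑ i, x i = ∑ i, y i) : x = y :=
  hxy.eq_of_not_lt fun hlt => (Fintype.sum_strictMono hlt).ne h

theorem exists_add_mem_box_of_isGreatest
    (hgen : ∀ x ∈ G, 0 ≤ x → x ≠ 0 → ∃ y ∈ G, 0 ≤ y ∧ y ≤ x ∧ ∑ i, y i = 1)
    {m : ι → R} (hm : IsGreatest (box G) m) (hx : x ∈ box G) (hxm : x ≠ m) :
    ∃ y ∈ box G, ∑ i, y i = 1 ∧ x + y ∈ box G := by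
  obtain ⟨y, hyG, hy₀, hy_le, hy_sum⟩ :=
    hgen (m - x) (G.sub_mem hm.1.1 hx.1) (sub_nonneg.2 (hm.2 hx)) (sub_ne_zero.2 hxm.symm)
  have hxy_le : x + y ≤ m := le_sub_iff_add_le'.1 hy_le
  have hx₀ := nonneg_of_mem_box hx
  exact ⟨y, mem_box_of_le hyG hy₀ (hy_le.trans (sub_le_self m hx₀)) hm.1, hy_sum,
    mem_box_of_le (G.add_mem hx.1 hyG) (add_nonneg hx₀ hy₀) hxy_le hm.1⟩

end Sum

variable [FloorRing R]

theorem fract_comp_eq_self_of_mem_box (hx : x ∈ box G) : Int.fract ∘ x = x :=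
  funext fun i => Int.fract_eq_self.2 (hx.2 i)

theorem fract_comp_mem_box (hG : ∀ v : ι → ℤ, (fun i => (v i : R)) ∈ G) (hx : x ∈ G) :
    Int.fract ∘ x ∈ box G :=
  ⟨G.sub_mem hx (hG fun i => ⌊x i⌋), fun _ => ⟨Int.fract_nonneg _, Int.fract_lt_one _⟩⟩

theorem exists_pos_iff_le_iff_exists_isGreatest_box
    (hG : ∀ v : ι → ℤ, (fun i => (v i : R)) ∈ G) :
    (∃ c ∈ G, ∀ y ∈ G, (∀ i, 0 < y i) ↔ c ≤ y) ↔ ∃ m, IsGreatest (box G) m := by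
  have one_mem : (1 : ι → R) ∈ G := by simpa [Pi.one_def] using hG 1
  constructor
  · rintro ⟨c, hc, hmin⟩
    have hc_pos : ∀ i, 0 < c i := (hmin c hc).2 le_rfl
    have hub : 1 - c ∈ upperBounds (box G) := fun x hx =>
      le_sub_comm.1 <| (hmin _ (G.sub_mem one_mem hx.1)).1 fun i => sub_pos.2 (hx.2 i).2
    have h_zero : (0 : ι → R) ∈ box G := ⟨G.zero_mem, fun _ => by simp⟩
    exact ⟨1 - c, ⟨G.sub_mem one_mem hc, fun i => ⟨hub h_zero i, sub_lt_self 1 (hc_pos i)⟩⟩, hub⟩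
  · rintro ⟨m, hm, hub⟩
    refine ⟨1 - m, G.sub_mem one_mem hm.1, fun y hy => ⟨fun hy_pos i => ?_, fun hle i => ?_⟩⟩
    · have h_fract : Int.fract (-y i) ≤ m i := hub (fract_comp_mem_box hG (G.neg_mem hy)) i
      have h_ceil : (1 : R) ≤ ⌈y i⌉ := by exact_mod_cast Int.one_le_ceil_iff.2 (hy_pos i)
      rw [Int.fract, Int.floor_neg, Int.cast_neg, sub_neg_eq_add] at h_fract
      exact sub_le_iff_le_add.2 (h_ceil.trans (neg_add_le_iff_le_add.1 h_fract))
    · exact (sub_pos.2 (hm.2 i).2).trans_le (hle i)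

variable [Fintype ι]

theorem fract_comp_eq_self_of_sum_eq (hx : 0 ≤ x) (h : ∑ i, Int.fract (x i) = ∑ i, x i) :
    Int.fract ∘ x = x :=
  eq_of_le_of_sum_eq (fun i => sub_le_self _ (Int.cast_nonneg (Int.floor_nonneg.2 (hx i)))) h

theorem isGreatest_box_of_forall_exists_sum_fract_add
    (hG : ∀ v : ι → ℤ, (fun i => (v i : R)) ∈ G)
    (hnat : ∀ x ∈ box G, ∃ k : ℕ, ∑ i, x i = k) {r : ℕ}
    (hr : ∀ x ∈ box G, ∑ i, x i ≤ r)
    (hstep : ∀ k : ℕ, 1 ≤ k → k < r → ∀ x ∈ box G, ∑ i, x i = k →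
      ∃ y ∈ box G, ∑ i, y i = 1 ∧ ∑ i, Int.fract (x i + y i) = (k + 1 : ℕ))
    {m : ι → R} (hm : {x ∈ box G | ∑ i, x i = r} = {m}) : IsGreatest (box G) m := by
  have hm_box : m ∈ box G := (hm.ge rfl).1
  have le_of_add_eq (d : ℕ) : ∀ k, k + d = r → ∀ x ∈ box G, ∑ i, x i = k → x ≤ m := by
    induction d with
    | zero =>
      rintro k rfl x hx hk
      exact (hm.le ⟨hx, hk⟩ : x = m).le
    | succ d ih =>
      intro k hkr x hx hk
      have hx₀ := nonneg_of_mem_box hx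
      obtain rfl | hk_pos := k.eq_zero_or_pos
      · have : 0 = x := eq_of_le_of_sum_eq hx₀ (by simp [hk])
        exact this ▸ nonneg_of_mem_box hm_box
      obtain ⟨y, hy, hy_sum, hxy_sum⟩ := hstep k hk_pos (by omega) x hx hk
      have hy₀ := nonneg_of_mem_box hy
      have hxy : Int.fract ∘ (x + y) = x + y :=
        fract_comp_eq_self_of_sum_eq (add_nonneg hx₀ hy₀)
          (by simpa [Finset.sum_add_distrib, hk, hy_sum] using hxy_sum)
      have hxy_le := ih (k + 1) (by omega) _ (fract_comp_mem_box hG (G.add_mem hx.1 hy.1)) hxy_sum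
      exact (le_add_of_nonneg_right hy₀).trans (hxy.ge.trans hxy_le)
  refine ⟨hm_box, fun x hx => ?_⟩
  obtain ⟨k, hk⟩ := hnat x hx
  have hkr : k ≤ r := by exact_mod_cast hk ▸ hr x hx
  exact le_of_add_eq (r - k) k (by omega) x hx hk

theorem exists_isGreatest_box_iff (hG : ∀ v : ι → ℤ, (fun i => (v i : R)) ∈ G)
    (hnat : ∀ x ∈ box G, ∃ k : ℕ, ∑ i, x i = k)
    (hgen : ∀ x ∈ G, 0 ≤ x → x ≠ 0 → ∃ y ∈ G, 0 ≤ y ∧ y ≤ x ∧ ∑ i, y i = 1) {r : ℕ}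
    (hr : IsGreatest {k : ℕ | ∃ x ∈ box G, ∑ i, x i = k} r) :
    (∃ m, IsGreatest (box G) m) ↔
      (∀ k : ℕ, 1 ≤ k → k < r → ∀ x ∈ box G, ∑ i, x i = k →
        ∃ y ∈ box G, ∑ i, y i = 1 ∧ ∑ i, Int.fract (x i + y i) = (k + 1 : ℕ)) ∧
      {x ∈ box G | ∑ i, x i = r}.ncard = 1 := by
  have sum_le : ∀ x ∈ box G, ∑ i, x i ≤ r := fun x hx => by
    obtain ⟨k, hk⟩ := hnat x hx
    rw [hk]
    exact_mod_cast hr.2 ⟨x, hx, hk⟩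
  constructor
  · rintro ⟨m, hm⟩
    obtain ⟨x₀, hx₀, hx₀_sum⟩ := hr.1
    have hm_sum : ∑ i, m i = r := (sum_le m hm.1).antisymm <|
      hx₀_sum ▸ Finset.sum_le_sum fun i _ => hm.2 hx₀ i
    refine ⟨fun k _ hkr x hx hk => ?_, Set.ncard_eq_one.2 ⟨m, ?_⟩⟩
    · have hxm : x ≠ m := by
        rintro rfl
        exact hkr.ne (by exact_mod_cast hk.symm.trans hm_sum)
      obtain ⟨y, hy, hy_sum, hxy⟩ := exists_add_mem_box_of_isGreatest hgen hm hx hxm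
      have hfract (i) : Int.fract (x i + y i) = x i + y i := Int.fract_eq_self.2 (hxy.2 i)
      exact ⟨y, hy, hy_sum, by simp [hfract, Finset.sum_add_distrib, hk, hy_sum]⟩
    · ext x
      refine ⟨fun hx => eq_of_le_of_sum_eq (hm.2 hx.1) (hx.2.trans hm_sum.symm), ?_⟩
      rintro rfl
      exact ⟨hm.1, hm_sum⟩
  · rintro ⟨hstep, huniq⟩
    obtain ⟨m, hm⟩ := Set.ncard_eq_one.1 huniq
    exact ⟨m, isGreatest_box_of_forall_exists_sum_fract_add hG hnat sum_le hstep hm⟩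

end Box

variable {n : ℕ}

section Barycentric

/-- Consecutive differences of the ratios `x_i / t_i`, starting from `0`: the coordinates of `x`
with respect to the vectors `(0, …, 0, t_i, …, t_n)`. For `t = (s, 1)` these vectors generate the
cone over the `s`-lecture hall polytope. -/
noncomputable def bary (t : Fin (n + 1) → ℤ) : (Fin (n + 1) → ℝ) →ₗ[ℝ] (Fin (n + 1) → ℝ) where
  toFun x := Fin.cases (x 0 / t 0) fun j => x j.succ / t j.succ - x j.castSucc / t j.castSucc
  map_add' x y := by
    ext i
    cases i using Fin.cases <;> simp only [Pi.add_apply, Fin.cases_zero, Fin.cases_succ] <;> ring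
  map_smul' c x := by
    ext i
    cases i using Fin.cases <;>
      simp only [Pi.smul_apply, smul_eq_mul, Fin.cases_zero, Fin.cases_succ, RingHom.id_apply] <;>
      ring

variable (t : Fin (n + 1) → ℤ) (x : Fin (n + 1) → ℝ)

theorem bary_zero : bary t x 0 = x 0 / t 0 := rfl

theorem bary_succ (j : Fin n) :
    bary t x j.succ = x j.succ / t j.succ - x j.castSucc / t j.castSucc := rfl

theorem sum_bary : ∑ i, bary t x i = x (Fin.last n) / t (Fin.last n) := by
  have h := (Fin.sum_univ_succ fun i => x i / t i).symm.trans (Fin.sum_univ_castSucc _)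
  simp only [Fin.sum_univ_succ, bary_zero, bary_succ, Finset.sum_sub_distrib]
  linarith

theorem forall_bary_mem_iff (H : AddSubgroup ℝ) :
    (∀ i, bary t x i ∈ H) ↔ ∀ i, x i / t i ∈ H := by
  refine ⟨fun h i => ?_, fun h i => ?_⟩
  · induction i using Fin.induction with
    | zero => exact h 0
    | succ j ih => exact by simpa [bary_succ] using H.add_mem (h j.succ) ih
  · cases i using Fin.cases with
    | zero => exact h 0
    | succ j => exact H.sub_mem (h j.succ) (h j.castSucc)

variable {t x}

theorem bary_injective (ht : ∀ i, t i ≠ 0) : Function.Injective (bary t) := by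
  refine (injective_iff_map_eq_zero _).2 fun x hx => funext fun i => ?_
  have h := (forall_bary_mem_iff t x ⊥).1 fun j => congrFun hx j
  exact (div_eq_zero_iff.1 (h i)).resolve_right (by exact_mod_cast ht i)

theorem bary_inf_nonneg_and_le (ht : ∀ i, 0 < t i) (hx : 0 ≤ bary t x) :
    0 ≤ bary t (x ⊓ fun i => (t i : ℝ)) ∧ bary t (x ⊓ fun i => (t i : ℝ)) ≤ bary t x := by
  have ratio_inf (i) : (x ⊓ fun i => (t i : ℝ)) i / t i = min (x i / t i) 1 := by
    have ht_pos : (0 : ℝ) < t i := by exact_mod_cast ht i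
    rw [Pi.inf_apply, ← min_div_div_right ht_pos.le, div_self ht_pos.ne']
  refine ⟨fun i => ?_, fun i => ?_⟩ <;> have hxi := hx i <;> cases i using Fin.cases <;>
    simp only [Pi.zero_apply, bary_zero, bary_succ, ratio_inf] at hxi ⊢ <;> grind

/-- The vector `(0, …, 0, t_i, …, t_n)`. -/
def tailVec (t : Fin (n + 1) → ℤ) (i : Fin (n + 1)) : Fin (n + 1) → ℤ :=
  fun j => if i ≤ j then t j else 0

theorem bary_tailVec (ht : ∀ i, t i ≠ 0) (i : Fin (n + 1)) :
    bary t (fun j => (tailVec t i j : ℝ)) = Pi.single i 1 := by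
  have ratio (j) : (tailVec t i j : ℝ) / t j = if i ≤ j then 1 else 0 := by
    have : (t j : ℝ) ≠ 0 := by exact_mod_cast ht j
    simp [tailVec, ite_div, this]
  ext j
  cases j using Fin.cases <;>
    simp only [bary_zero, bary_succ, ratio, Pi.single_apply, Fin.le_def, Fin.ext_iff] <;> grind

theorem bary_sum_smul_tailVec (ht : ∀ i, t i ≠ 0) (c : Fin (n + 1) → ℝ) :
    bary t (∑ i, c i • fun j => (tailVec t i j : ℝ)) = c := by
  simp only [map_sum, map_smul, bary_tailVec ht]
  exact (pi_eq_sum_univ' c).symm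

theorem interior_bary_nonneg (ht : ∀ i, t i ≠ 0) :
    interior {x | 0 ≤ bary t x} = {x | ∀ i, 0 < bary t x i} := by
  let e := (LinearEquiv.ofInjectiveEndo (bary t) (bary_injective ht)).toContinuousLinearEquiv
  have h := e.toHomeomorph.preimage_interior (Set.Ici 0)
  rw [← Set.pi_univ_Ici, interior_pi_set Set.finite_univ] at h
  simpa [e, Set.preimage, Pi.le_def] using h.symm

end Barycentric
section Lattice

/-- `bary` on lattice points. Its range is the lattice `ℤ^{n+1}` in barycentric coordinates. -/
noncomputable def baryInt (t : Fin (n + 1) → ℤ) : (Fin (n + 1) → ℤ) →+ (Fin (n + 1) → ℝ) :=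
  (bary t).toAddMonoidHom.comp ((Int.castAddHom ℝ).compLeft (Fin (n + 1)))

/-- The point of the half-open unit cube congruent modulo `ℤ^{n+1}` to the barycentric coordinates
of `-e`. For `t = (s, 1)` and `e` an inversion sequence of `s` followed by `0`, these are the
barycentric coordinates of the lattice point `lamOf n s e`. -/
noncomputable def boxPoint (t e : Fin (n + 1) → ℤ) : Fin (n + 1) → ℝ :=
  Int.fract ∘ baryInt t (-e)

variable {t : Fin (n + 1) → ℤ}

theorem baryInt_apply (z : Fin (n + 1) → ℤ) : baryInt t z = bary t fun i => (z i : ℝ) := rfl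

theorem intCast_mem_range_baryInt (ht : ∀ i, t i ≠ 0) (v : Fin (n + 1) → ℤ) :
    (fun i => (v i : ℝ)) ∈ (baryInt t).range := by
  refine ⟨∑ i, v i • tailVec t i, ?_⟩
  simp only [map_sum, map_zsmul, baryInt_apply, bary_tailVec ht, ← Int.cast_smul_eq_zsmul ℝ]
  exact (pi_eq_sum_univ' _).symm

theorem exists_le_sum_eq_one (ht : ∀ i, 0 < t i) (hlast : t (Fin.last n) = 1)
    (x : Fin (n + 1) → ℝ) (hx : x ∈ (baryInt t).range) (hx₀ : 0 ≤ x) (hx_ne : x ≠ 0) :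
    ∃ y ∈ (baryInt t).range, 0 ≤ y ∧ y ≤ x ∧ ∑ i, y i = 1 := by
  obtain ⟨z, rfl⟩ := hx
  have hz_last : 1 ≤ z (Fin.last n) := by
    have h_pos := Fintype.sum_pos (hx₀.lt_of_ne' hx_ne)
    rw [baryInt_apply, sum_bary, hlast, Int.cast_one, div_one] at h_pos
    exact_mod_cast h_pos
  have h_cast : baryInt t (z ⊓ t) = bary t ((fun i => (z i : ℝ)) ⊓ fun i => (t i : ℝ)) := by
    rw [baryInt_apply]
    congr 1
    ext i
    simp
  obtain ⟨h_nonneg, h_le⟩ := bary_inf_nonneg_and_le ht hx₀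
  refine ⟨baryInt t (z ⊓ t), ⟨_, rfl⟩, h_cast ▸ h_nonneg, h_cast ▸ h_le, ?_⟩
  simpa [baryInt_apply, sum_bary, hlast] using by exact_mod_cast hz_last

theorem fract_comp_baryInt_eq_iff (ht : ∀ i, t i ≠ 0) {z w : Fin (n + 1) → ℤ} :
    Int.fract ∘ baryInt t z = Int.fract ∘ baryInt t w ↔ ∀ i, z i ≡ w i [ZMOD t i] := by
  have h_div (i) : (z i - w i : ℝ) / t i ∈ (Int.castAddHom ℝ).range ↔ t i ∣ z i - w i := by
    have hti : (t i : ℝ) ≠ 0 := by exact_mod_cast ht i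
    simp only [AddMonoidHom.mem_range, Int.coe_castAddHom, eq_div_iff hti, dvd_def, mul_comm (t i)]
    exact exists_congr fun k => by norm_cast; exact eq_comm
  have h := forall_bary_mem_iff t (fun i => ((z - w) i : ℝ)) (Int.castAddHom ℝ).range
  rw [← baryInt_apply, map_sub] at h
  simp only [Pi.sub_apply, Int.cast_sub, h_div, ← Int.modEq_iff_dvd, AddMonoidHom.mem_range,
    Int.coe_castAddHom] at h
  simp only [Int.modEq_comm (a := z _), ← h, funext_iff, Function.comp_apply, Int.fract_eq_fract,
    eq_comm]

theorem fract_comp_boxPoint_add (ht : ∀ i, t i ≠ 0) (e f : Fin (n + 1) → ℤ) :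
    Int.fract ∘ (boxPoint t e + boxPoint t f) = boxPoint t (invAdd (n + 1) t e f) := by
  have h_fract : Int.fract ∘ (boxPoint t e + boxPoint t f) = Int.fract ∘ baryInt t (-(e + f)) := by
    ext i
    refine Int.fract_eq_fract.2 ⟨-⌊baryInt t (-e) i⌋ - ⌊baryInt t (-f) i⌋, ?_⟩
    simp only [boxPoint, neg_add, map_add, Pi.add_apply, Function.comp_apply, Int.fract]
    push_cast
    ring
  rw [h_fract, boxPoint, fract_comp_baryInt_eq_iff ht]
  exact fun i => (Int.mod_modEq _ _).symm.neg

theorem isInvSeq_emod {m : ℕ} {s : Fin m → ℤ} (hs : ∀ i, 0 < s i) (z : Fin m → ℤ) :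
    IsInvSeq m s fun i => z i % s i :=
  fun i => ⟨Int.emod_nonneg _ (hs i).ne', Int.emod_lt_of_pos _ (hs i)⟩

theorem bijOn_boxPoint (ht : ∀ i, 0 < t i) :
    Set.BijOn (boxPoint t) {e | IsInvSeq (n + 1) t e} (box (baryInt t).range) := by
  have ht_ne (i) : t i ≠ 0 := (ht i).ne'
  refine ⟨fun e _ => fract_comp_mem_box (intCast_mem_range_baryInt ht_ne) ⟨-e, rfl⟩, ?_, ?_⟩
  · intro e he f hf hef
    ext i
    have h_modEq : e i ≡ f i [ZMOD t i] := by
      simpa using ((fract_comp_baryInt_eq_iff ht_ne).1 hef i).neg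
    rwa [Int.ModEq, Int.emod_eq_of_lt (he i).1 (he i).2, Int.emod_eq_of_lt (hf i).1 (hf i).2]
      at h_modEq
  · intro x hx
    obtain ⟨z, rfl⟩ := hx.1
    refine ⟨fun i => -z i % t i, isInvSeq_emod ht (-z), ?_⟩
    rw [← fract_comp_eq_self_of_mem_box hx, boxPoint, fract_comp_baryInt_eq_iff ht_ne]
    exact fun i => by simpa using (Int.mod_modEq (-z i) (t i)).neg

end Lattice

section Ascents

theorem invRatio_mem_Ico {s e : Fin n → ℤ} (he : IsInvSeq n s e) (i : Fin n) :
    invRatio n s e i ∈ Set.Ico 0 1 := by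
  obtain ⟨h₀, h₁⟩ := he i
  have hs : (0 : ℚ) < s i := by exact_mod_cast h₀.trans_lt h₁
  exact ⟨div_nonneg (by exact_mod_cast h₀) hs.le, (div_lt_one hs).2 (by exact_mod_cast h₁)⟩

theorem prevRatio_mem_Ico {s e : Fin n → ℤ} (he : IsInvSeq n s e) (i : Fin n) :
    prevRatio n s e i ∈ Set.Ico 0 1 := by
  unfold prevRatio
  split_ifs
  · simp
  · exact invRatio_mem_Ico he _

variable {t e : Fin (n + 1) → ℤ}

theorem prevRatio_zero : prevRatio (n + 1) t e 0 = 0 := rfl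

theorem prevRatio_succ (j : Fin n) :
    prevRatio (n + 1) t e j.succ = invRatio (n + 1) t e j.castSucc := rfl

theorem baryInt_neg_apply (i : Fin (n + 1)) :
    baryInt t (-e) i = ((prevRatio (n + 1) t e i - invRatio (n + 1) t e i : ℚ) : ℝ) := by
  cases i using Fin.cases with
  | zero => simp [baryInt_apply, bary_zero, prevRatio_zero, invRatio, neg_div]
  | succ j =>
    simp [baryInt_apply, bary_succ, prevRatio_succ, invRatio, neg_div, neg_add_eq_sub]

theorem fract_sub_eq_add_ite {a b : ℚ} (ha : a ∈ Set.Ico 0 1) (hb : b ∈ Set.Ico 0 1) :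
    Int.fract (a - b) = a - b + if a < b then 1 else 0 := by
  obtain ⟨ha₀, ha₁⟩ := ha
  obtain ⟨hb₀, hb₁⟩ := hb
  split_ifs with hab
  · exact Int.fract_eq_iff.2 ⟨by linarith, by linarith, -1, by simp⟩
  · rw [add_zero, Int.fract_eq_self]
    constructor <;> linarith

theorem boxPoint_apply (he : IsInvSeq (n + 1) t e) (i : Fin (n + 1)) :
    boxPoint t e i = baryInt t (-e) i + if i ∈ ascSet (n + 1) t e then 1 else 0 := by
  have h := fract_sub_eq_add_ite (prevRatio_mem_Ico he i) (invRatio_mem_Ico he i)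
  rw [boxPoint, Function.comp_apply, baryInt_neg_apply, ← Rat.cast_fract, h]
  simp [ascSet, apply_ite (Rat.cast : ℚ → ℝ)]

theorem sum_boxPoint (he : IsInvSeq (n + 1) t e) :
    ∑ i, boxPoint t e i = asc (n + 1) t e - e (Fin.last n) / t (Fin.last n) := by
  simp only [boxPoint_apply he, Finset.sum_add_distrib, baryInt_apply, sum_bary, asc]
  simp [neg_div, neg_add_eq_sub]

end Ascents

section LectureHallCone

variable {s : Fin n → ℤ}

/-- The sequence `(s_1, …, s_n, 1)`, for which `lhpCone n s` is generated by the vectors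
`tailVec (withOne s) i`. -/
def withOne (s : Fin n → ℤ) : Fin (n + 1) → ℤ := Fin.snoc s 1

theorem withOne_castSucc (i : Fin n) : withOne s i.castSucc = s i := by simp [withOne]

theorem withOne_last : withOne s (Fin.last n) = 1 := by simp [withOne]

theorem withOne_pos (hs : ∀ i, 0 < s i) (i : Fin (n + 1)) : 0 < withOne s i := by
  cases i using Fin.lastCases with
  | last => simp [withOne_last]
  | cast i => simpa [withOne_castSucc] using hs i

theorem tailVec_withOne_castSucc (i : Fin n) :
    (fun j => (tailVec (withOne s) i.castSucc j : ℝ)) = Fin.snoc (lhpVertexR n s i) 1 := by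
  ext j
  cases j using Fin.lastCases with
  | last => simp [tailVec, withOne_last, Fin.le_last]
  | cast j => simp [tailVec, lhpVertexR, withOne_castSucc, apply_ite (Int.cast : ℤ → ℝ)]

theorem tailVec_withOne_last :
    (fun j => (tailVec (withOne s) (Fin.last n) j : ℝ)) = Fin.snoc (0 : Fin n → ℝ) 1 := by
  ext j
  cases j using Fin.lastCases <;> simp [tailVec, withOne_last]

theorem mem_lhpCone_iff_exists {x : Fin (n + 1) → ℝ} :
    x ∈ lhpCone n s ↔
      ∃ c : Fin (n + 1) → ℝ, 0 ≤ c ∧ x = ∑ i, c i • fun j => (tailVec (withOne s) i j : ℝ) := by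
  simp only [Fin.sum_univ_castSucc, tailVec_withOne_castSucc, tailVec_withOne_last]
  constructor
  · rintro ⟨a, b, ha, hb, rfl⟩
    refine ⟨Fin.snoc b a, fun i => ?_, by simp [add_comm]⟩
    cases i using Fin.lastCases <;> simp [ha, hb _]
  · rintro ⟨c, hc, rfl⟩
    exact ⟨c (Fin.last n), fun i => c i.castSucc, hc _, fun i => hc _, add_comm _ _⟩

theorem lhpCone_eq (hs : ∀ i, 0 < s i) : lhpCone n s = {x | 0 ≤ bary (withOne s) x} := by
  have ht (i) : withOne s i ≠ 0 := (withOne_pos hs i).ne'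
  ext x
  rw [mem_lhpCone_iff_exists]
  constructor
  · rintro ⟨c, hc, rfl⟩
    simpa [bary_sum_smul_tailVec ht] using hc
  · exact fun hx => ⟨_, hx, bary_injective ht (bary_sum_smul_tailVec ht _).symm⟩

theorem mem_lhpConeZ_iff (hs : ∀ i, 0 < s i) {z : Fin (n + 1) → ℤ} :
    z ∈ lhpConeZ n s ↔ 0 ≤ baryInt (withOne s) z := by
  rw [lhpConeZ, lhpCone_eq hs]
  rfl

theorem mem_lhpConeInteriorZ_iff (hs : ∀ i, 0 < s i) {z : Fin (n + 1) → ℤ} :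
    z ∈ lhpConeInteriorZ n s ↔ ∀ i, 0 < baryInt (withOne s) z i := by
  rw [lhpConeInteriorZ, lhpCone_eq hs, interior_bary_nonneg fun i => (withOne_pos hs i).ne']
  rfl

theorem isGorenstein_iff_exists_isGreatest_box (hs : ∀ i, 0 < s i) :
    IsGorenstein n s ↔ ∃ m, IsGreatest (box (baryInt (withOne s)).range) m := by
  have ht (i) : withOne s i ≠ 0 := (withOne_pos hs i).ne'
  rw [← exists_pos_iff_le_iff_exists_isGreatest_box (intCast_mem_range_baryInt ht)]
  simp only [IsGorenstein, Set.ext_iff, AddMonoidHom.mem_range, exists_exists_eq_and,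
    forall_exists_index, forall_apply_eq_imp_iff]
  refine exists_congr fun c => forall_congr' fun z => ?_
  rw [Set.image_add_left, Set.mem_preimage, mem_lhpConeZ_iff hs, mem_lhpConeInteriorZ_iff hs,
    map_add, map_neg, neg_add_eq_sub, sub_nonneg]
  exact iff_comm

end LectureHallCone

section InversionSequences

variable {s e : Fin n → ℤ}

/-- The inversion sequence `(e_1, …, e_n, 0)` of `withOne s`. -/
def withZero (e : Fin n → ℤ) : Fin (n + 1) → ℤ := Fin.snoc e 0

theorem withZero_castSucc (i : Fin n) : withZero e i.castSucc = e i := by simp [withZero]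

theorem withZero_last : withZero e (Fin.last n) = 0 := by simp [withZero]

theorem bijOn_withZero :
    Set.BijOn withZero {e | IsInvSeq n s e} {e | IsInvSeq (n + 1) (withOne s) e} := by
  refine ⟨fun e he => ?_, fun e _ f _ hef => ?_, fun e he => ⟨Fin.init e, fun i => ?_, ?_⟩⟩
  · intro i
    cases i using Fin.lastCases <;>
      simp [withZero_last, withOne_last, withZero_castSucc, withOne_castSucc, he _]
  · exact (Fin.snoc_injective2 hef).1
  · simpa only [Fin.init, withOne_castSucc] using he i.castSucc
  · have h_last : e (Fin.last n) = 0 := by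
      have := he (Fin.last n)
      rw [withOne_last] at this
      omega
    rw [withZero, ← h_last, Fin.snoc_init_self]

theorem invAdd_withZero (e f : Fin n → ℤ) :
    invAdd (n + 1) (withOne s) (withZero e) (withZero f) = withZero (invAdd n s e f) := by
  ext i
  cases i using Fin.lastCases <;>
    simp [invAdd, withZero_last, withOne_last, withZero_castSucc, withOne_castSucc]

theorem invRatio_withZero_castSucc (i : Fin n) :
    invRatio (n + 1) (withOne s) (withZero e) i.castSucc = invRatio n s e i := by
  simp [invRatio, withOne_castSucc, withZero_castSucc]

theorem prevRatio_withZero_castSucc (i : Fin n) :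
    prevRatio (n + 1) (withOne s) (withZero e) i.castSucc = prevRatio n s e i :=
  if_congr Iff.rfl rfl (invRatio_withZero_castSucc ⟨(i : ℕ) - 1, by omega⟩)

theorem asc_withZero (he : IsInvSeq n s e) : asc (n + 1) (withOne s) (withZero e) = asc n s e := by
  have h_last : ¬ prevRatio (n + 1) (withOne s) (withZero e) (Fin.last n) <
      invRatio (n + 1) (withOne s) (withZero e) (Fin.last n) := by
    simpa [invRatio, withZero_last] using (prevRatio_mem_Ico (bijOn_withZero.mapsTo he) _).1
  simp only [asc, ascSet, Finset.card_filter, Fin.sum_univ_castSucc, prevRatio_withZero_castSucc,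
    invRatio_withZero_castSucc, if_neg h_last, add_zero]

theorem bijOn_boxPoint_withZero (hs : ∀ i, 0 < s i) :
    Set.BijOn (fun e => boxPoint (withOne s) (withZero e)) {e | IsInvSeq n s e}
      (box (baryInt (withOne s)).range) :=
  (bijOn_boxPoint (withOne_pos hs)).comp bijOn_withZero

theorem sum_boxPoint_withZero (he : IsInvSeq n s e) :
    ∑ i, boxPoint (withOne s) (withZero e) i = asc n s e := by
  simp [sum_boxPoint (bijOn_withZero.mapsTo he), asc_withZero he, withZero_last]

theorem bijOn_boxPoint_withZero_of_asc_eq (hs : ∀ i, 0 < s i) (k : ℕ) :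
    Set.BijOn (fun e => boxPoint (withOne s) (withZero e)) {e | IsInvSeq n s e ∧ asc n s e = k}
      {x ∈ box (baryInt (withOne s)).range | ∑ i, x i = k} := by
  have h_bij := bijOn_boxPoint_withZero hs
  refine ⟨fun e he => ⟨h_bij.mapsTo he.1, ?_⟩, h_bij.injOn.mono fun e he => he.1, ?_⟩
  · rw [sum_boxPoint_withZero he.1, he.2]
  · rintro x ⟨hx, hk⟩
    obtain ⟨e, he, rfl⟩ := h_bij.surjOn hx
    rw [sum_boxPoint_withZero he, Nat.cast_inj] at hk
    exact ⟨e, ⟨he, hk⟩, rfl⟩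

theorem exists_mem_box_sum_eq_iff (hs : ∀ i, 0 < s i) (k : ℕ) :
    (∃ x ∈ box (baryInt (withOne s)).range, ∑ i, x i = k) ↔
      ∃ e, IsInvSeq n s e ∧ asc n s e = k := by
  change Set.Nonempty {x ∈ box _ | _} ↔ Set.Nonempty {e | _}
  rw [← (bijOn_boxPoint_withZero_of_asc_eq hs k).image_eq, Set.image_nonempty]

theorem exists_sum_eq_natCast_of_mem_box (hs : ∀ i, 0 < s i) (x : Fin (n + 1) → ℝ)
    (hx : x ∈ box (baryInt (withOne s)).range) : ∃ k : ℕ, ∑ i, x i = k := by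
  obtain ⟨e, he, rfl⟩ := (bijOn_boxPoint_withZero hs).surjOn hx
  exact ⟨asc n s e, sum_boxPoint_withZero he⟩

theorem hStar_eq_ncard_box (hs : ∀ i, 0 < s i) (k : ℕ) :
    hStar n s k = {x ∈ box (baryInt (withOne s)).range | ∑ i, x i = k}.ncard := by
  have h_bij := bijOn_boxPoint_withZero_of_asc_eq hs k
  rw [← h_bij.image_eq, h_bij.injOn.ncard_image]
  rfl

theorem forall_exists_sum_fract_add_iff (hs : ∀ i, 0 < s i) (k : ℕ) :
    (∀ x ∈ box (baryInt (withOne s)).range, ∑ i, x i = k →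
      ∃ y ∈ box (baryInt (withOne s)).range,
        ∑ i, y i = 1 ∧ ∑ i, Int.fract (x i + y i) = (k + 1 : ℕ)) ↔
    ∀ e, IsInvSeq n s e → asc n s e = k →
      ∃ e', IsInvSeq n s e' ∧ asc n s e' = 1 ∧
        IsInvSeq n s (invAdd n s e e') ∧ asc n s (invAdd n s e e') = k + 1 := by
  have h_add (e e' : Fin n → ℤ) : IsInvSeq n s (invAdd n s e e') := isInvSeq_emod hs _
  have h_sum_add (e e' : Fin n → ℤ) :
      ∑ i, Int.fract (boxPoint (withOne s) (withZero e) i + boxPoint (withOne s) (withZero e') i) =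
        asc n s (invAdd n s e e') := by
    rw [← sum_boxPoint_withZero (h_add e e'), ← invAdd_withZero,
      ← fract_comp_boxPoint_add fun i => (withOne_pos hs i).ne']
    rfl
  simp only [← (bijOn_boxPoint_withZero hs).image_eq, Set.forall_mem_image, Set.exists_mem_image,
    h_sum_add, h_add, true_and]
  refine forall₂_congr fun e he => ?_
  rw [sum_boxPoint_withZero he, Nat.cast_inj]
  refine imp_congr_right fun _ => exists_congr fun e' => and_congr_right fun he' => ?_
  rw [sum_boxPoint_withZero he', Nat.cast_eq_one, Nat.cast_inj]

end InversionSequences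

end LectureHall

open LectureHall

theorem lhp_gorenstein_iff_level_cond (n : ℕ) (s : Fin n → ℤ)
    (hs : ∀ i, 0 < s i) (r : ℕ)
    (hr : IsGreatest {k : ℕ | ∃ e : Fin n → ℤ, IsInvSeq n s e ∧ asc n s e = k} r) :
    IsGorenstein n s ↔
      ((∀ k : ℕ, 1 ≤ k → k < r →
        ∀ e : Fin n → ℤ, IsInvSeq n s e → asc n s e = k →
          ∃ e' : Fin n → ℤ, IsInvSeq n s e' ∧ asc n s e' = 1 ∧
            IsInvSeq n s (invAdd n s e e') ∧ asc n s (invAdd n s e e') = k + 1) ∧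
        hStar n s r = 1) := by
  have ht := withOne_pos hs
  have h_lattice := intCast_mem_range_baryInt fun i => (ht i).ne'
  have h_nat := exists_sum_eq_natCast_of_mem_box hs
  have h_gen := exists_le_sum_eq_one ht withOne_last
  simp only [← exists_mem_box_sum_eq_iff hs] at hr
  rw [isGorenstein_iff_exists_isGreatest_box hs, exists_isGreatest_box_iff h_lattice h_nat h_gen hr,
    hStar_eq_ncard_box hs]
  simp only [forall_exists_sum_fract_add_iff hs]
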